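/- Let X be any graph on n vertices with minimum degree δ ≥ 1 and let μ be the greatest eigenvalue of its Laplacian matrix. Then every independent set S satisfies |S| ≤ n·(μ − δ)/μ. -/

import Mathlib

open Matrix Finset

/-- If every eigenvalue of a real symmetric matrix is at most `μ`, then so is its Rayleigh
quotient. -/
theorem Matrix.IsHermitian.dotProduct_mulVec_le {ι : Type*} [Fintype ι] [DecidableEq ι]
    {M : Matrix ι ι ℝ} (hM : M.IsHermitian) {μ : ℝ}
    (hμ : ∀ (ν : ℝ) (v : ι → ℝ), v ≠ 0 → M *ᵥ v = ν • v → ν ≤ μ) (x : ι → ℝ) :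
    x ⬝ᵥ M *ᵥ x ≤ μ * (x ⬝ᵥ x) := by
  have hN : (μ • (1 : Matrix ι ι ℝ) - M).IsHermitian :=
    (isHermitian_one.smul (IsSelfAdjoint.all μ)).sub hM
  have hpos : (μ • (1 : Matrix ι ι ℝ) - M).PosSemidef := by
    rw [hN.posSemidef_iff_eigenvalues_nonneg]
    intro i
    have hv := hN.mulVec_eigenvectorBasis i
    have hv0 : (hN.eigenvectorBasis i : ι → ℝ) ≠ 0 := fun h =>
      hN.eigenvectorBasis.orthonormal.ne_zero i (by ext j; exact congrFun h j)
    have := hμ (μ - hN.eigenvalues i) _ hv0 (by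
      rw [sub_mulVec, smul_mulVec, one_mulVec] at hv
      rw [sub_smul, ← hv, sub_sub_cancel])
    simpa using this
  have h := hpos.dotProduct_mulVec_nonneg x
  simpa [sub_mulVec, smul_mulVec, dotProduct_sub] using h

/-- The Laplacian quadratic form at the vector `n • 1_S - |S| • 1`, for an independent set `S`. -/
theorem card_mul_minDegree_le_of_independent {n : ℕ} {A : Matrix (Fin n) (Fin n) ℝ}
    (hsym : A.IsSymm) {μ δ : ℝ}
    (hμ : ∀ (ν : ℝ) (v : Fin n → ℝ), v ≠ 0 →
      (diagonal (fun i => ∑ j, A i j) - A) *ᵥ v = ν • v → ν ≤ μ)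
    (hδ : ∀ i, δ ≤ ∑ j, A i j) {S : Finset (Fin n)} (hS : S.Nonempty)
    (hind : ∀ i ∈ S, ∀ j ∈ S, A i j = 0) :
    n * δ ≤ μ * (n - S.card) := by
  set L := diagonal (fun i => ∑ j, A i j) - A with hL
  have hLsymm : L.IsSymm := (isSymm_diagonal _).sub hsym
  have hLherm : L.IsHermitian := by rw [IsHermitian, conjTranspose_eq_transpose_of_trivial, hLsymm]
  set u : Fin n → ℝ := fun i => if i ∈ S then 1 else 0 with hu
  have hL1 : L *ᵥ 1 = 0 := by
    ext i
    rw [hL, sub_mulVec, Pi.sub_apply, mulVec_diagonal]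
    simp [mulVec, dotProduct]
  have h1L : (1 : Fin n → ℝ) ⬝ᵥ L *ᵥ u = 0 := by
    rw [dotProduct_mulVec, ← mulVec_transpose, hLsymm, hL1, zero_dotProduct]
  have hAu : u ⬝ᵥ A *ᵥ u = 0 := by
    simp only [hu, dotProduct, mulVec, ite_mul, one_mul, zero_mul, mul_ite, mul_one, mul_zero,
      sum_ite_mem, univ_inter]
    exact sum_eq_zero fun i hi => sum_eq_zero fun j hj => hind i hi j hj
  have hLu : u ⬝ᵥ L *ᵥ u = ∑ i ∈ S, ∑ j, A i j := by
    rw [hL, sub_mulVec, dotProduct_sub, hAu, sub_zero]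
    simp [hu, dotProduct, mulVec_diagonal]
  have hdeg : S.card * δ ≤ u ⬝ᵥ L *ᵥ u := by
    rw [hLu, ← nsmul_eq_mul]
    exact card_nsmul_le_sum _ _ _ fun i _ => hδ i
  have huu : u ⬝ᵥ u = S.card := by simp [hu, dotProduct]
  have hu1 : u ⬝ᵥ 1 = S.card := by simp [hu, dotProduct]
  have h1u : 1 ⬝ᵥ u = (S.card : ℝ) := by rw [dotProduct_comm, hu1]
  have h11 : (1 : Fin n → ℝ) ⬝ᵥ 1 = n := by simp [dotProduct]
  have hray := hLherm.dotProduct_mulVec_le hμ ((n : ℝ) • u - (S.card : ℝ) • 1)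
  simp only [mulVec_sub, mulVec_smul, hL1, smul_zero, sub_zero, sub_dotProduct, dotProduct_sub,
    smul_dotProduct, dotProduct_smul, h1L, huu, hu1, h1u, h11, smul_eq_mul, mul_zero] at hray
  have hs : (0 : ℝ) < S.card := by exact_mod_cast hS.card_pos
  have hn : (0 : ℝ) < n := by
    exact_mod_cast hS.card_pos.trans_le (by simpa using card_le_univ S)
  have hdeg' := mul_le_mul_of_nonneg_left hdeg (mul_self_nonneg (n : ℝ))
  refine le_of_mul_le_mul_left ?_ (mul_pos hn hs)
  linarith

/-- Weakened Laplacian bound via the minimum degree `δ ≥ 1`: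
every independent set satisfies `|S| ≤ n (μ − δ)/μ`. -/
theorem stmt5 (n : ℕ) (hn : 0 < n)
    (A : Matrix (Fin n) (Fin n) ℝ) (hsym : A.IsSymm)
    (h01 : ∀ i j, A i j = 0 ∨ A i j = 1) (hloop : ∀ i, A i i = 0)
    (L : Matrix (Fin n) (Fin n) ℝ)
    (hL : L = Matrix.diagonal (fun i => ∑ j, A i j) - A)
    (μ : ℝ)
    (hμeig : ∃ v : Fin n → ℝ, v ≠ 0 ∧ L.mulVec v = μ • v)
    (hμmax : ∀ (ν : ℝ) (v : Fin n → ℝ), v ≠ 0 → L.mulVec v = ν • v → ν ≤ μ)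
    (δ : ℝ) (hδ1 : 1 ≤ δ)
    (hδmin : ∀ i, δ ≤ ∑ j, A i j) (hδex : ∃ i, ∑ j, A i j = δ)
    (S : Finset (Fin n)) (hind : ∀ i ∈ S, ∀ j ∈ S, i ≠ j → A i j = 0) :
    (S.card : ℝ) ≤ n * (μ - δ) / μ := by
  subst hL
  have hn' : (0 : ℝ) < n := by exact_mod_cast hn
  have hsingle := card_mul_minDegree_le_of_independent hsym hμmax hδmin
    (singleton_nonempty (⟨0, hn⟩ : Fin n)) (by simp [hloop])
  have hn1 : (1 : ℝ) ≤ n := by exact_mod_cast hn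
  simp only [card_singleton, Nat.cast_one] at hsingle
  have hμ : 0 < μ :=
    pos_of_mul_pos_left (lt_of_lt_of_le (by positivity) hsingle) (by linarith)
  rw [le_div_iff₀ hμ]
  rcases S.eq_empty_or_nonempty with rfl | hS
  · simp only [card_empty, Nat.cast_zero, zero_mul]
    nlinarith
  · have := card_mul_minDegree_le_of_independent hsym hμmax hδmin hS fun i hi j hj => by
      by_cases h : i = j
      · rw [h, hloop]
      · exact hind i hi j hj h
    linarith
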